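/- arXiv:math/9906132 — 4 statements merged into one kernel-verified Lean document; each statement's English description precedes it below -/
import Mathlib

section
/- Fix an integer k ≥ 2 and let F be the set of k-th-power-free integers. For every nonzero integer a, the limit w(a) = lim_{R→∞} (1/(2R)) · #{x ∈ ℤ : |x| < R, |x − a| < R, x ∈ F and x − a ∈ F} exists and equals ξ(k) · ∏_{p : p^k | a} (1 + 1/(p^k − 2)), the product being over primes p with p^k dividing a. Moreover the error term is O(R^{−1+2/k−1/k²}): there is a constant C (depending on a) such that the difference between the expression under the limit and its limit has absolute value at most C·R^{−1+2/k−1/k²} for all sufficiently large R. -/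
/-!
The count of `x` is a sum over the window `|x|, |x - a| < R` of the product of the indicators of
`x ∈ F` and `x - a ∈ F`. Each indicator is a Möbius sum, `1_F(x) = ∑_{d^k ∣ x} μ(d)` for `x ≠ 0`
(`sum_moebius_kfree`), in which only `d ≤ D ≈ R^(1/k)` matter. For `x - a` this sum is cut at
`Z ≈ R^((k-1)/k²)`. The discarded `e > Z` contribute at most `∑_{Z < e ≤ D} #{x : e^k ∣ x - a}`,
which is `O(R Z^(1-k) + D)`. For the remaining pairs `(d, e)`, the number of `x` in the window with
`d^k ∣ x` and `e^k ∣ x - a` is `2R / lcm(d, e)^k` if `gcd(d, e)^k ∣ a` and `0` otherwise, up to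
`O(1)` (`card_pairSet`); the accumulated error is `O(D Z)`. Both errors are `O(R^(2/k - 1/k²))`
(`abs_card_sub_le`, `error_bound`).

The main term is a partial sum of the absolutely convergent double series
`∑_{d,e} μ(d) μ(e) [gcd(d, e)^k ∣ a] / lcm(d, e)^k`, with tail again `O(Z^(1-k))`. To evaluate the
series (`tsum_pairTerm`), fix `e`: the sum over `d` has a multiplicative summand, and its Euler
product is `∏_p (1 - p^(-k))` times a finite correction `∏_{p ∣ e} rho p`. The resulting summand in
`e` is multiplicative too, and a second Euler product gives the local factors `1 - 2/p^k` when
`p^k ∤ a` and `1 - 1/p^k = (1 - 2/p^k)(1 + 1/(p^k - 2))` when `p^k ∣ a`.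
-/


/-- An integer is `k`-th-power-free if it is not divisible by `d^k` for any integer `d > 1`. -/
def KFree (k : ℕ) (x : ℤ) : Prop := ∀ d : ℤ, 1 < d → ¬ (d ^ k ∣ x)

/-- `ξ(k) = ∏_p (1 − 2/p^k)`, the product running over all primes. -/
noncomputable def xiN (k : ℕ) : ℝ := ∏' p : Nat.Primes, (1 - 2 / ((p : ℕ) : ℝ) ^ k)

namespace KFreeCorrelation

/-! ### The singular series as an Euler product -/

open ArithmeticFunction ArithmeticFunction.Moebius in
/-- Euler product of `∑ μ(d) g(d)` for multiplicative `g`: since `μ` kills the higher prime powers,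
the local factor at `p` is `1 - g(p)`. -/
theorem hasProd_moebius {g : ℕ → ℝ} (h1 : g 1 = 1)
    (hmul : ∀ {m n : ℕ}, m.Coprime n → g (m * n) = g m * g n)
    (hsum : Summable fun d : ℕ => (μ d : ℝ) * g d) :
    HasProd (fun p : Nat.Primes => 1 - g p) (∑' d : ℕ, (μ d : ℝ) * g d) := by
  have key := EulerProduct.eulerProduct_hasProd (f := fun d : ℕ => (μ d : ℝ) * g d)
    (by simp [h1])
    (fun {m n} hmn => by
      rw [isMultiplicative_moebius.map_mul_of_coprime hmn, hmul hmn]; push_cast; ring)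
    hsum.norm (by simp)
  have hlocal : ∀ p : Nat.Primes,
      ∑' j : ℕ, (μ ((p : ℕ) ^ j) : ℝ) * g ((p : ℕ) ^ j) = 1 - g p := by
    intro p
    rw [tsum_eq_sum (s := Finset.range 2)]
    · simp [Finset.sum_range_succ, h1, moebius_apply_prime p.2]; ring
    · intro j hj
      have hj2 : 1 < j := by simpa using hj
      rw [moebius_apply_prime_pow p.2 (by omega), if_neg (by omega)]
      simp
  simpa only [hlocal] using key

theorem summable_inv_pow {k : ℕ} (hk : 2 ≤ k) : Summable fun d : ℕ => 1 / (d : ℝ) ^ k :=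
  Real.summable_one_div_nat_pow.2 (by omega)

/-- `χ(g) = g^k` if `g^k ∣ a`, and `0` otherwise. With `g = gcd(d, e)` it carries the solvability
condition for `x ≡ 0 (d^k)`, `x ≡ a (e^k)` together with the passage from `(d e)^k` to
`lcm(d, e)^k`. -/
noncomputable def chi (k : ℕ) (a : ℤ) (g : ℕ) : ℝ := if (g : ℤ) ^ k ∣ a then (g : ℝ) ^ k else 0

theorem chi_nonneg (k : ℕ) (a : ℤ) (g : ℕ) : 0 ≤ chi k a g := by
  unfold chi; split_ifs <;> positivity

theorem chi_le (k : ℕ) {a : ℤ} (ha : a ≠ 0) (g : ℕ) : chi k a g ≤ |(a : ℝ)| := by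
  unfold chi
  split_ifs with h
  · have := Int.le_of_dvd (abs_pos.2 ha) ((dvd_abs _ _).2 h)
    exact_mod_cast this
  · positivity

theorem chi_one (k : ℕ) (a : ℤ) : chi k a 1 = 1 := by simp [chi]

theorem chi_mul (k : ℕ) (a : ℤ) {m n : ℕ} (h : m.Coprime n) :
    chi k a (m * n) = chi k a m * chi k a n := by
  have hc : IsCoprime ((m : ℤ) ^ k) ((n : ℤ) ^ k) := (Nat.isCoprime_iff_coprime.2 h).pow
  have : ((m * n : ℕ) : ℤ) ^ k ∣ a ↔ (m : ℤ) ^ k ∣ a ∧ (n : ℤ) ^ k ∣ a := by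
    push_cast
    rw [mul_pow]
    exact ⟨fun h => ⟨dvd_of_mul_right_dvd h, dvd_of_mul_left_dvd h⟩, fun h => hc.mul_dvd h.1 h.2⟩
  unfold chi
  simp only [this]
  by_cases h1 : (m : ℤ) ^ k ∣ a <;> by_cases h2 : (n : ℤ) ^ k ∣ a <;> simp [h1, h2, mul_pow]

open ArithmeticFunction.Moebius in
/-- The density, weighted with Möbius signs, of the integers `x` with `d^k ∣ x`, `e^k ∣ x - a`:
it is `μ(d) μ(e) / lcm(d, e)^k` if `gcd(d, e)^k ∣ a`, and `0` otherwise. It vanishes if `d` or `e`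
is `0`, because `μ(0) = 0`. -/
noncomputable def pairTerm (k : ℕ) (a : ℤ) (q : ℕ × ℕ) : ℝ :=
  (μ q.1 : ℝ) * (μ q.2 : ℝ) * (chi k a (q.1.gcd q.2) / ((q.1 : ℝ) ^ k * (q.2 : ℝ) ^ k))

theorem abs_moebius_real (n : ℕ) : |((ArithmeticFunction.moebius n : ℤ) : ℝ)| ≤ 1 := by
  exact_mod_cast ArithmeticFunction.abs_moebius_le_one

theorem abs_pairTerm_le (k : ℕ) {a : ℤ} (ha : a ≠ 0) (q : ℕ × ℕ) :
    |pairTerm k a q| ≤ |(a : ℝ)| * (1 / (q.1 : ℝ) ^ k * (1 / (q.2 : ℝ) ^ k)) := by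
  unfold pairTerm
  rw [abs_mul, abs_mul, abs_div, abs_of_nonneg (chi_nonneg _ _ _),
    abs_of_nonneg (by positivity : (0 : ℝ) ≤ (q.1 : ℝ) ^ k * (q.2 : ℝ) ^ k)]
  have h1 := mul_le_one₀ (abs_moebius_real q.1) (abs_nonneg _) (abs_moebius_real q.2)
  have h2 := chi_nonneg k a (q.1.gcd q.2)
  calc _ ≤ 1 * (chi k a (q.1.gcd q.2) / ((q.1 : ℝ) ^ k * (q.2 : ℝ) ^ k)) := by gcongr
    _ ≤ |(a : ℝ)| / ((q.1 : ℝ) ^ k * (q.2 : ℝ) ^ k) := by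
      rw [one_mul]; gcongr; exact chi_le k ha _
    _ = _ := by rw [one_div_mul_one_div, mul_one_div]

theorem summable_bound {k : ℕ} (hk : 2 ≤ k) (c : ℝ) :
    Summable fun q : ℕ × ℕ => c * (1 / (q.1 : ℝ) ^ k * (1 / (q.2 : ℝ) ^ k)) :=
  ((summable_inv_pow hk).mul_of_nonneg (summable_inv_pow hk)
    (fun _ => by positivity) (fun _ => by positivity)).mul_left c

theorem summable_pairTerm {k : ℕ} (hk : 2 ≤ k) {a : ℤ} (ha : a ≠ 0) :
    Summable (pairTerm k a) :=
  (summable_bound hk |(a : ℝ)|).of_norm_bounded (fun q => abs_pairTerm_le k ha q)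

theorem prime_pow_ge_four {k : ℕ} (hk : 2 ≤ k) (p : Nat.Primes) : (4 : ℝ) ≤ ((p : ℕ) : ℝ) ^ k := by
  have h2 : 2 ≤ (p : ℕ) := p.2.two_le
  have : 4 ≤ (p : ℕ) ^ k := calc
    4 = 2 ^ 2 := by norm_num
    _ ≤ 2 ^ k := Nat.pow_le_pow_right (by norm_num) hk
    _ ≤ _ := Nat.pow_le_pow_left h2 k
  exact_mod_cast this

/-- The factor by which a prime `p ∣ e` changes the Euler product over `d`, for fixed `e`. -/
noncomputable def rho (k : ℕ) (a : ℤ) (p : ℕ) : ℝ :=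
  (1 - chi k a p / (p : ℝ) ^ k) / (1 - 1 / (p : ℝ) ^ k)

theorem summable_primes {k : ℕ} (hk : 2 ≤ k) :
    Summable fun p : Nat.Primes => 1 / ((p : ℕ) : ℝ) ^ k :=
  (summable_inv_pow hk).comp_injective Nat.Primes.coe_nat_injective

theorem multipliable_primes {k : ℕ} (hk : 2 ≤ k) (c : ℝ) :
    Multipliable fun p : Nat.Primes => (1 - c / ((p : ℕ) : ℝ) ^ k) := by
  have := multipliable_one_add_of_summable (f := fun p : Nat.Primes => -(c / ((p : ℕ) : ℝ) ^ k))
    ((((summable_primes hk).mul_left c).congr (fun p => by ring)).neg.norm)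
  simpa [sub_eq_add_neg] using this

theorem tprod_ne_zero {k : ℕ} (hk : 2 ≤ k) :
    ∏' p : Nat.Primes, (1 - 1 / ((p : ℕ) : ℝ) ^ k) ≠ 0 := by
  have := tprod_one_add_ne_zero_of_summable (f := fun p : Nat.Primes => -(1 / ((p : ℕ) : ℝ) ^ k))
    (fun p => by
      have h4 := prime_pow_ge_four hk p
      have : 1 / ((p : ℕ) : ℝ) ^ k < 1 := by rw [div_lt_one (by linarith)]; linarith
      linarith) ((summable_primes hk).neg.norm)
  simpa [sub_eq_add_neg] using this

/-- A finite product over the primes in `s`, seen as an infinite product over all primes. -/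
theorem hasProd_finset (s : Finset ℕ) (hs : ∀ p ∈ s, p.Prime) (f : ℕ → ℝ) :
    HasProd (fun p : Nat.Primes => if (p : ℕ) ∈ s then f p else 1) (∏ p ∈ s, f p) := by
  set t : Finset Nat.Primes := s.preimage (fun p : Nat.Primes => (p : ℕ))
    Nat.Primes.coe_nat_injective.injOn
  have hmem : ∀ p : Nat.Primes, p ∈ t ↔ (p : ℕ) ∈ s := fun p => Finset.mem_preimage
  have h := hasProd_prod_of_ne_finset_one (L := SummationFilter.unconditional _)
    (f := fun p : Nat.Primes => if (p : ℕ) ∈ s then f p else 1) (s := t)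
    (fun p hp => if_neg fun h => hp ((hmem p).2 h))
  have hprod : ∏ p ∈ s, f p = ∏ p ∈ t, if (p : ℕ) ∈ s then f p else 1 := by
    refine (Finset.prod_bij (fun (p : Nat.Primes) _ => (p : ℕ)) (fun p hp => (hmem p).1 hp)
      (fun p _ q _ h => Nat.Primes.coe_nat_injective h)
      (fun q hq => ⟨⟨q, hs q hq⟩, (hmem _).2 hq, rfl⟩)
      (fun p hp => if_pos ((hmem p).1 hp))).symm
  rwa [hprod]

open ArithmeticFunction.Moebius in
/-- The sum over `d` for fixed `e`: the local factor at a prime `p` is `1 - 1/p^k` if `p ∤ e`, and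
`1 - χ(p)/p^k = (1 - 1/p^k) rho(p)` if `p ∣ e`. -/
theorem tsum_fst {k : ℕ} (hk : 2 ≤ k) {a : ℤ} (ha : a ≠ 0) {e : ℕ} (he : e ≠ 0) :
    ∑' d : ℕ, (μ d : ℝ) * (chi k a (d.gcd e) / (d : ℝ) ^ k) =
      (∏' p : Nat.Primes, (1 - 1 / ((p : ℕ) : ℝ) ^ k)) * ∏ p ∈ e.primeFactors, rho k a p := by
  have hs : Summable fun d : ℕ => (μ d : ℝ) * (chi k a (d.gcd e) / (d : ℝ) ^ k) := by
    refine ((summable_inv_pow hk).mul_left |(a : ℝ)|).of_norm_bounded fun d => ?_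
    rw [Real.norm_eq_abs, abs_mul, abs_of_nonneg (div_nonneg (chi_nonneg _ _ _) (by positivity))]
    calc _ ≤ 1 * (|(a : ℝ)| / (d : ℝ) ^ k) := by
          gcongr
          · exact div_nonneg (chi_nonneg _ _ _) (by positivity)
          · exact abs_moebius_real d
          · exact chi_le k ha _
      _ = _ := by ring
  have h1 := hasProd_moebius (g := fun d : ℕ => chi k a (d.gcd e) / (d : ℝ) ^ k)
    (by simp [chi_one])
    (fun {m n} hmn => by
      rw [hmn.mul_gcd, chi_mul k a (Nat.Coprime.of_dvd (m.gcd_dvd_left e) (n.gcd_dvd_left e) hmn)]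
      push_cast; rw [mul_pow, div_mul_div_comm]) hs
  have h2 := (multipliable_primes hk 1).hasProd.mul
    (hasProd_finset e.primeFactors (fun p hp => Nat.prime_of_mem_primeFactors hp) (rho k a))
  refine h1.unique ?_
  convert h2 using 2 with p
  have h4 := prime_pow_ge_four hk p
  by_cases hpe : (p : ℕ) ∣ e
  · have : (p : ℕ) ∈ e.primeFactors := Nat.mem_primeFactors.2 ⟨p.2, hpe, he⟩
    rw [if_pos this, Nat.gcd_eq_left hpe, rho, mul_div_cancel₀]
    have : 1 / ((p : ℕ) : ℝ) ^ k < 1 := by rw [div_lt_one (by linarith)]; linarith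
    linarith
  · have : (p : ℕ) ∉ e.primeFactors := fun h => hpe (Nat.dvd_of_mem_primeFactors h)
    rw [if_neg this, (Nat.Prime.coprime_iff_not_dvd p.2).2 hpe, chi_one, mul_one]

open ArithmeticFunction.Moebius in
/-- The double series `∑_{d,e}` factors as the Euler product giving `w(a)`. -/
theorem tsum_pairTerm {k : ℕ} (hk : 2 ≤ k) {a : ℤ} (ha : a ≠ 0) :
    ∑' q : ℕ × ℕ, pairTerm k a q =
      (∏' p : Nat.Primes, (1 - 2 / ((p : ℕ) : ℝ) ^ k)) *
        ∏ p ∈ a.natAbs.primeFactors.filter (fun p : ℕ => (p : ℤ) ^ k ∣ a),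
          (1 + 1 / ((p : ℝ) ^ k - 2)) := by
  set Z := ∏' p : Nat.Primes, (1 - 1 / ((p : ℕ) : ℝ) ^ k) with hZ
  have hZ0 : Z ≠ 0 := tprod_ne_zero hk
  have hS := (summable_pairTerm hk ha).prod_symm
  set g : ℕ → ℝ := fun e => (∏ p ∈ e.primeFactors, rho k a p) / (e : ℝ) ^ k with hg
  have hrow : ∀ e : ℕ, ∑' d : ℕ, pairTerm k a (d, e) = Z * ((μ e : ℝ) * g e) := by
    intro e
    rcases eq_or_ne e 0 with rfl | he
    · simp [pairTerm]
    · have : ∀ d : ℕ, pairTerm k a (d, e) =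
          ((μ e : ℝ) / (e : ℝ) ^ k) * ((μ d : ℝ) * (chi k a (d.gcd e) / (d : ℝ) ^ k)) := by
        intro d; simp only [pairTerm]; field_simp
      simp_rw [this, tsum_mul_left, tsum_fst hk ha he]
      simp only [hg]; ring
  -- no bound on `rho` is needed: summability is inherited from the double series as `Z ≠ 0`
  have hsum : Summable fun e : ℕ => (μ e : ℝ) * g e := by
    have := hS.prod
    simp only [Prod.swap_prod_mk, hrow] at this
    exact (summable_mul_left_iff hZ0).1 this
  have hT : ∑' q : ℕ × ℕ, pairTerm k a q = Z * ∑' e : ℕ, (μ e : ℝ) * g e := by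
    rw [← (Equiv.prodComm ℕ ℕ).tsum_eq]
    refine hS.tsum_prod.trans ?_
    simp only [Prod.swap_prod_mk, hrow, tsum_mul_left]
  rw [hT]
  have h1 := hasProd_moebius (g := g) (by simp [hg])
    (fun {m n} hmn => by
      simp only [hg]
      rw [hmn.primeFactors_mul, Finset.prod_union hmn.disjoint_primeFactors]
      push_cast; rw [mul_pow, div_mul_div_comm]) hsum
  have h2 := (multipliable_primes hk 1).hasProd.mul h1
  have h3 := (multipliable_primes hk 2).hasProd.mul
    (hasProd_finset (a.natAbs.primeFactors.filter (fun p : ℕ => (p : ℤ) ^ k ∣ a))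
      (fun p hp => Nat.prime_of_mem_primeFactors (Finset.mem_filter.1 hp).1)
      (fun p => 1 + 1 / ((p : ℝ) ^ k - 2)))
  refine h2.unique ?_
  convert h3 using 2 with p
  have h4 := prime_pow_ge_four hk p
  have hmem : (p : ℕ) ∈ a.natAbs.primeFactors.filter (fun p : ℕ => (p : ℤ) ^ k ∣ a) ↔
      ((p : ℕ) : ℤ) ^ k ∣ a := by
    rw [Finset.mem_filter, Nat.mem_primeFactors]
    refine ⟨fun h => h.2, fun h => ⟨⟨p.2, ?_, by simpa using ha⟩, h⟩⟩
    exact Int.natCast_dvd.1 ((dvd_pow_self _ (by omega)).trans h)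
  have hne : 1 - 1 / ((p : ℕ) : ℝ) ^ k ≠ 0 := by
    have : 1 / ((p : ℕ) : ℝ) ^ k < 1 := by rw [div_lt_one (by linarith)]; linarith
    linarith
  simp only [hg, hmem, p.2.primeFactors, Finset.prod_singleton, rho, chi]
  generalize ((p : ℕ) : ℝ) ^ k = y at *
  have e1 : y - 1 ≠ 0 := by linarith
  have e2 : y - 2 ≠ 0 := by linarith
  have e3 : y ≠ 0 := by linarith
  split_ifs
  · field_simp; ring
  · field_simp; ring

/-! ### Counting pairs of divisibility conditions -/

/-- The integers `x ∉ {0, a}` with `|x| < N` and `|x - a| < N`. The points `0` and `a` are left out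
because every `d^k` divides `0`, so that the Möbius sum for `1_F` fails there. -/
noncomputable def window (a N : ℤ) : Finset ℤ :=
  (Finset.Ioo (-N) N).filter fun x => |x - a| < N ∧ x ≠ 0 ∧ x ≠ a

/-- The members `x` of the window with `d^k ∣ x` and `e^k ∣ x - a`. -/
noncomputable def pairSet (k : ℕ) (a N : ℤ) (d e : ℕ) : Finset ℤ :=
  (window a N).filter fun x => (d : ℤ) ^ k ∣ x ∧ (e : ℤ) ^ k ∣ x - a

theorem card_Ioc_modEq {L U r : ℤ} (hLU : L ≤ U) (hr : 0 < r) (v : ℤ) :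
    |(((Finset.Ioc L U).filter fun x => x ≡ v [ZMOD r]).card : ℝ) - ((U - L : ℤ) : ℝ) / r| ≤ 1 := by
  have hq : |(((Finset.Ioc L U).filter fun x => x ≡ v [ZMOD r]).card : ℚ)
      - ((U - L : ℤ) : ℚ) / r| ≤ 1 := by
    have h := Int.Ioc_filter_modEq_card L U hr v
    have hr' : (0 : ℚ) < r := by exact_mod_cast hr
    have hmono : ⌊((L : ℚ) - v) / r⌋ ≤ ⌊((U : ℚ) - v) / r⌋ := by
      apply Int.floor_mono
      have : (L : ℚ) ≤ U := by exact_mod_cast hLU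
      gcongr
    rw [max_eq_left (by linarith)] at h
    have h' : (((Finset.Ioc L U).filter fun x => x ≡ v [ZMOD r]).card : ℚ)
        = (⌊((U : ℚ) - v) / r⌋ : ℚ) - (⌊((L : ℚ) - v) / r⌋ : ℚ) := by exact_mod_cast h
    rw [h']
    have e : ((U - L : ℤ) : ℚ) / r = ((U : ℚ) - v) / r - ((L : ℚ) - v) / r := by
      push_cast; field_simp; ring
    rw [e, abs_le]
    have a1 := Int.floor_le (((U : ℚ) - v) / r)
    have a2 := Int.lt_floor_add_one (((U : ℚ) - v) / r)
    have a3 := Int.floor_le (((L : ℚ) - v) / r)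
    have a4 := Int.lt_floor_add_one (((L : ℚ) - v) / r)
    constructor <;> linarith
  exact_mod_cast hq

/-- Two congruences `x ≡ 0 (d^k)`, `x ≡ a (e^k)` merge into one modulo the least common multiple
when `gcd(d, e)^k ∣ a` and are incompatible otherwise, so the count is the density times the
length, up to a bounded error. -/
theorem card_pairSet {k : ℕ} {a N : ℤ} (hN : 1 ≤ N) (haN : |a| ≤ N) {d e : ℕ} (hd : 0 < d)
    (he : 0 < e) :
    |((pairSet k a N d e).card : ℝ)
      - 2 * N * (chi k a (d.gcd e) / ((d : ℝ) ^ k * (e : ℝ) ^ k))| ≤ |(a : ℝ)| + 4 := by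
  have hgcd : ((Int.gcd ((d : ℤ) ^ k) ((e : ℤ) ^ k) : ℕ) : ℤ) = ((d.gcd e : ℕ) : ℤ) ^ k := by
    have : Int.gcd ((d : ℤ) ^ k) ((e : ℤ) ^ k) = (d ^ k).gcd (e ^ k) := by
      exact_mod_cast Int.gcd_natCast_natCast (d ^ k) (e ^ k)
    rw [this, Nat.pow_gcd_pow]; push_cast; rfl
  by_cases hg : ((d.gcd e : ℕ) : ℤ) ^ k ∣ a
  · obtain ⟨x₀, hx1, hx2⟩ : ∃ x₀ : ℤ, (d : ℤ) ^ k ∣ x₀ ∧ (e : ℤ) ^ k ∣ x₀ - a := by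
      rw [← hgcd, Int.gcd_eq_gcd_ab] at hg
      obtain ⟨t, ht⟩ := hg
      set u := Int.gcdA ((d : ℤ) ^ k) ((e : ℤ) ^ k)
      set v := Int.gcdB ((d : ℤ) ^ k) ((e : ℤ) ^ k)
      exact ⟨(d : ℤ) ^ k * (u * t), dvd_mul_right _ _, ⟨-(v * t), by rw [ht]; ring⟩⟩
    set r : ℤ := ((Nat.lcm (d ^ k) (e ^ k) : ℕ) : ℤ) with hr
    have hr0 : 0 < r := by
      rw [hr]; exact_mod_cast Nat.lcm_pos (pow_pos hd k) (pow_pos he k)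
    set L := max (-N) (a - N) with hL
    set U := min N (a + N) - 1 with hU
    have hlen : U - L = 2 * N - |a| - 1 := by
      rcases abs_cases a with ⟨h1, h2⟩ | ⟨h1, h2⟩ <;> rw [h1] <;> omega
    have hLU : L ≤ U := by omega
    set B := (Finset.Ioc L U).filter fun x => x ≡ x₀ [ZMOD r] with hB
    have hcong : ∀ x : ℤ, x ≡ x₀ [ZMOD r] ↔ (d : ℤ) ^ k ∣ x ∧ (e : ℤ) ^ k ∣ x - a := by
      intro x
      rw [Int.modEq_comm, Int.modEq_iff_dvd, hr]
      have : ((Nat.lcm (d ^ k) (e ^ k) : ℕ) : ℤ) ∣ x - x₀ ↔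
          ((d ^ k : ℕ) : ℤ) ∣ x - x₀ ∧ ((e ^ k : ℕ) : ℤ) ∣ x - x₀ := by
        simp only [Int.natCast_dvd, Nat.lcm_dvd_iff]
      rw [this]
      push_cast
      refine and_congr (dvd_sub_left hx1) ?_
      rw [show x - a = (x - x₀) + (x₀ - a) by ring, dvd_add_left hx2]
    have hset : pairSet k a N d e = B \ {0, a} := by
      ext x
      simp only [pairSet, window, hB, Finset.mem_filter, Finset.mem_Ioo, Finset.mem_Ioc,
        Finset.mem_sdiff, Finset.mem_insert, Finset.mem_singleton, hcong, not_or, abs_lt]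
      constructor
      · rintro ⟨⟨⟨h1, h2⟩, ⟨h3, h4⟩, h5, h6⟩, h7⟩
        exact ⟨⟨⟨by omega, by omega⟩, h7⟩, h5, h6⟩
      · rintro ⟨⟨⟨h1, h2⟩, h7⟩, h5, h6⟩
        exact ⟨⟨⟨by omega, by omega⟩, ⟨by omega, by omega⟩, h5, h6⟩, h7⟩
    have hc1 : (pairSet k a N d e).card ≤ B.card := by
      rw [hset]; exact Finset.card_le_card Finset.sdiff_subset
    have hc2 : B.card ≤ (pairSet k a N d e).card + 2 := by
      have h1 := Finset.le_card_sdiff ({0, a} : Finset ℤ) B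
      have h2 : ({0, a} : Finset ℤ).card ≤ 2 := Finset.card_le_two
      rw [hset]; omega
    have hc1' : ((pairSet k a N d e).card : ℝ) ≤ B.card := by exact_mod_cast hc1
    have hc2' : (B.card : ℝ) ≤ (pairSet k a N d e).card + 2 := by exact_mod_cast hc2
    have hBc := card_Ioc_modEq hLU hr0 x₀
    rw [← hB, hlen] at hBc
    have hchi : chi k a (d.gcd e) / ((d : ℝ) ^ k * (e : ℝ) ^ k) = 1 / (r : ℝ) := by
      rw [chi, if_pos hg]
      have h1 : (((d.gcd e : ℕ) : ℝ) ^ k) * (r : ℝ) = (d : ℝ) ^ k * (e : ℝ) ^ k := by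
        rw [hr, Int.cast_natCast]
        have := Nat.gcd_mul_lcm (d ^ k) (e ^ k)
        rw [Nat.pow_gcd_pow] at this
        exact_mod_cast this
      have h2 : (0 : ℝ) < r := by exact_mod_cast hr0
      have h3 : (0 : ℝ) < (d : ℝ) ^ k * (e : ℝ) ^ k := by positivity
      rw [div_eq_div_iff h3.ne' h2.ne', h1, one_mul]
    rw [hchi]
    have hr1 : (1 : ℝ) ≤ r := by exact_mod_cast hr0
    have hsplit : ((2 * N - |a| - 1 : ℤ) : ℝ) / r
        = 2 * N * (1 / (r : ℝ)) - (|(a : ℝ)| + 1) / r := by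
      push_cast; ring
    have hlo : 0 ≤ (|(a : ℝ)| + 1) / r := by positivity
    have hhi : (|(a : ℝ)| + 1) / r ≤ |(a : ℝ)| + 1 := div_le_self (by positivity) hr1
    rw [hsplit] at hBc
    rw [abs_le] at hBc ⊢
    constructor <;> linarith [abs_nonneg (a : ℝ)]
  · have hempty : pairSet k a N d e = ∅ := by
      rw [pairSet, Finset.filter_eq_empty_iff]
      rintro x - ⟨h1, h2⟩
      apply hg
      rw [← hgcd]
      have h3 := (Int.gcd_dvd_left ((d : ℤ) ^ k) ((e : ℤ) ^ k)).trans h1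
      have h4 := (Int.gcd_dvd_right ((d : ℤ) ^ k) ((e : ℤ) ^ k)).trans h2
      simpa using dvd_sub h3 h4
    rw [hempty, chi, if_neg hg]
    simp; positivity

open ArithmeticFunction ArithmeticFunction.Moebius in
open Classical in
/-- Möbius inversion: the `d` with `d^k ∣ x` are the divisors of the largest `m` with
`m^k ∣ x`, and `x` is `k`-free iff `m = 1`. -/
theorem sum_moebius_kfree {k : ℕ} (hk : 2 ≤ k) {x : ℤ} (hx : x ≠ 0) {D : ℕ}
    (hD : |x| ≤ (D : ℤ) ^ k) :
    ∑ d ∈ Finset.Icc 1 D, (if (d : ℤ) ^ k ∣ x then (μ d : ℝ) else 0) =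
      if KFree k x then 1 else 0 := by
  set m := Nat.floorRoot k x.natAbs with hm
  have hx' : x.natAbs ≠ 0 := Int.natAbs_ne_zero.2 hx
  have hm0 : m ≠ 0 := Nat.floorRoot_ne_zero.2 ⟨by omega, hx'⟩
  have hdvd : ∀ d : ℕ, (d : ℤ) ^ k ∣ x ↔ d ∣ m := by
    intro d
    rw [hm, ← Nat.pow_dvd_iff_dvd_floorRoot, ← Int.natCast_dvd]; push_cast; rfl
  have hfree : KFree k x ↔ m = 1 := by
    constructor
    · intro h
      by_contra h1
      exact h m (by exact_mod_cast (by omega : 1 < m)) ((hdvd m).2 dvd_rfl)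
    · intro h d hd hdx
      lift d to ℕ using by omega
      rw [hdvd, h, Nat.dvd_one] at hdx
      omega
  have hset : (Finset.Icc 1 D).filter (fun d : ℕ => (d : ℤ) ^ k ∣ x) = m.divisors := by
    ext d
    simp only [Finset.mem_filter, Finset.mem_Icc, hdvd, Nat.mem_divisors]
    refine ⟨fun h => ⟨h.2, hm0⟩, fun h => ⟨⟨Nat.pos_of_dvd_of_pos h.1 (by omega), ?_⟩, h.1⟩⟩
    have h1 : (d : ℤ) ^ k ≤ (D : ℤ) ^ k :=
      (Int.le_of_dvd (abs_pos.2 hx) ((dvd_abs _ _).2 ((hdvd d).2 h.1))).trans hD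
    have h2 : d ^ k ≤ D ^ k := by exact_mod_cast h1
    exact (Nat.pow_le_pow_iff_left (by omega)).1 h2
  rw [← Finset.sum_filter, hset, ← Int.cast_sum, ← coe_mul_zeta_apply, moebius_mul_coe_zeta,
    one_apply]
  simp [hfree]

theorem sum_Ioc_inv_pow_le {k : ℕ} (hk : 2 ≤ k) {Z : ℕ} (hZ : 1 ≤ Z) (n : ℕ) :
    ∑ d ∈ Finset.Ioc Z n, 1 / (d : ℝ) ^ k ≤ 1 / (Z : ℝ) ^ (k - 1) := by
  have hZ' : (0 : ℝ) < Z := by exact_mod_cast hZ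
  rcases le_or_gt Z n with h | h
  · have h1 := sum_Ioc_inv_sq_le_sub (α := ℝ) (by omega : Z ≠ 0) h
    have hn : (0 : ℝ) ≤ (n : ℝ)⁻¹ := by positivity
    calc ∑ d ∈ Finset.Ioc Z n, 1 / (d : ℝ) ^ k
        ≤ ∑ d ∈ Finset.Ioc Z n, 1 / (Z : ℝ) ^ (k - 2) * ((d : ℝ) ^ 2)⁻¹ := by
          refine Finset.sum_le_sum fun d hd => ?_
          have hZd : Z ≤ d := (Finset.mem_Ioc.1 hd).1.le
          have hZd' : (Z : ℝ) ≤ d := by exact_mod_cast hZd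
          have hd' : (0 : ℝ) < d := hZ'.trans_le hZd'
          obtain ⟨j, rfl⟩ := Nat.exists_eq_add_of_le' hk
          rw [Nat.add_sub_cancel, pow_add, ← one_div, one_div_mul_one_div]
          gcongr
      _ = 1 / (Z : ℝ) ^ (k - 2) * ∑ d ∈ Finset.Ioc Z n, ((d : ℝ) ^ 2)⁻¹ := by
          rw [Finset.mul_sum]
      _ ≤ 1 / (Z : ℝ) ^ (k - 2) * (Z : ℝ)⁻¹ := by gcongr; linarith
      _ = _ := by
          obtain ⟨j, rfl⟩ := Nat.exists_eq_add_of_le' hk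
          rw [show j + 2 - 1 = j + 1 by omega, Nat.add_sub_cancel, pow_succ]
          field_simp
  · rw [Finset.Ioc_eq_empty (by omega), Finset.sum_empty]; positivity

theorem tsum_tail_le {k : ℕ} (hk : 2 ≤ k) {Z : ℕ} (hZ : 1 ≤ Z) :
    ∑' d : ℕ, 1 / (d : ℝ) ^ k ≤
      ∑ d ∈ Finset.Icc 1 Z, 1 / (d : ℝ) ^ k + 1 / (Z : ℝ) ^ (k - 1) := by
  refine Real.tsum_le_of_sum_range_le (fun d => by positivity) fun n => ?_
  have hk0 : k ≠ 0 := by omega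
  calc ∑ d ∈ Finset.range n, 1 / (d : ℝ) ^ k
      ≤ ∑ d ∈ insert 0 (Finset.Icc 1 Z ∪ Finset.Ioc Z n), 1 / (d : ℝ) ^ k := by
        refine Finset.sum_le_sum_of_subset_of_nonneg ?_ fun _ _ _ => by positivity
        intro d hd
        simp only [Finset.mem_range, Finset.mem_insert, Finset.mem_union, Finset.mem_Icc,
          Finset.mem_Ioc] at hd ⊢
        omega
    _ = ∑ d ∈ Finset.Icc 1 Z, 1 / (d : ℝ) ^ k + ∑ d ∈ Finset.Ioc Z n, 1 / (d : ℝ) ^ k := by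
        rw [Finset.sum_insert (by simp), Finset.sum_union]
        · simp [hk0]
        · rw [Finset.disjoint_left]
          intro d h1 h2
          simp only [Finset.mem_Icc, Finset.mem_Ioc] at h1 h2
          omega
    _ ≤ _ := by gcongr; exact sum_Ioc_inv_pow_le hk hZ n

theorem abs_tsum_sub_sum_le {ι : Type*} {f b : ι → ℝ} (hb : Summable b) (h : ∀ i, |f i| ≤ b i)
    (s : Finset ι) : |∑' i, f i - ∑ i ∈ s, f i| ≤ ∑' i, b i - ∑ i ∈ s, b i := by
  have hf : Summable f := hb.of_norm_bounded h
  have h1 := (hb.sub hf).sum_le_tsum s (fun i _ => sub_nonneg.2 (abs_le.1 (h i)).2)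
  have h2 := (hb.add hf).sum_le_tsum s (fun i _ => by linarith [(abs_le.1 (h i)).1])
  rw [hb.tsum_sub hf, Finset.sum_sub_distrib] at h1
  rw [hb.tsum_add hf, Finset.sum_add_distrib] at h2
  rw [abs_le]; constructor <;> linarith

/-- The tail of the double series is dominated by `|a|` times that of `∑ 1/(d e)^k`, a product of
two convergent series. -/
theorem abs_tsum_pairTerm_sub_le {k : ℕ} (hk : 2 ≤ k) {a : ℤ} (ha : a ≠ 0) {D Z : ℕ}
    (hZ : 1 ≤ Z) (hZD : Z ≤ D) :
    |∑' q : ℕ × ℕ, pairTerm k a q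
        - ∑ q ∈ Finset.Icc 1 D ×ˢ Finset.Icc 1 Z, pairTerm k a q|
      ≤ 4 * |(a : ℝ)| * (1 / (Z : ℝ) ^ (k - 1)) := by
  refine (abs_tsum_sub_sum_le (summable_bound hk |(a : ℝ)|) (abs_pairTerm_le k ha) _).trans ?_
  have hs := summable_inv_pow hk
  rw [tsum_mul_left, ← Finset.mul_sum, ← hs.tsum_mul_tsum hs
    (hs.mul_of_nonneg hs (fun _ => by positivity) (fun _ => by positivity)),
    Finset.sum_product]
  dsimp only
  rw [← Finset.sum_mul_sum]
  have hD' := tsum_tail_le hk (hZ.trans hZD)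
  have hZ' := tsum_tail_le hk hZ
  have h1' := tsum_tail_le hk le_rfl
  simp only [Finset.Icc_self, Finset.sum_singleton, Nat.cast_one, one_pow, div_one] at h1'
  have hDle := hs.sum_le_tsum (Finset.Icc 1 D) (fun _ _ => by positivity)
  have hZle := hs.sum_le_tsum (Finset.Icc 1 Z) (fun _ _ => by positivity)
  have hZ0 : 0 ≤ ∑ d ∈ Finset.Icc 1 Z, 1 / (d : ℝ) ^ k := Finset.sum_nonneg fun _ _ => by positivity
  have hmon : 1 / (D : ℝ) ^ (k - 1) ≤ 1 / (Z : ℝ) ^ (k - 1) := by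
    have : (0 : ℝ) < Z := by exact_mod_cast hZ
    gcongr
  have hp : 0 ≤ 1 / (Z : ℝ) ^ (k - 1) := by positivity
  generalize ∑' d : ℕ, 1 / (d : ℝ) ^ k = G at *
  generalize ∑ d ∈ Finset.Icc 1 D, 1 / (d : ℝ) ^ k = GD at *
  generalize ∑ d ∈ Finset.Icc 1 Z, 1 / (d : ℝ) ^ k = GZ at *
  generalize 1 / (Z : ℝ) ^ (k - 1) = t at *
  generalize 1 / (D : ℝ) ^ (k - 1) = t' at *
  have : G * G - GD * GZ ≤ 4 * t := by
    have e1 : G * (G - GZ) ≤ 2 * t :=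
      mul_le_mul (by linarith) (by linarith) (by linarith) (by norm_num)
    have e2 : GZ * (G - GD) ≤ 2 * t :=
      mul_le_mul (by linarith) (by linarith) (by linarith) (by norm_num)
    nlinarith
  calc _ = |(a : ℝ)| * (G * G - GD * GZ) := by ring
    _ ≤ |(a : ℝ)| * (4 * t) := by gcongr
    _ = _ := by ring

open ArithmeticFunction.Moebius in
open Classical in
/-- The sieve estimate: keep the full Möbius sum for the condition on `x`, and truncate at `Z`
the one for the condition on `x - a`. -/
theorem abs_card_sub_le {k : ℕ} (hk : 2 ≤ k) {a N : ℤ} (hN : 1 ≤ N) (haN : |a| ≤ N)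
    {D Z : ℕ} (hZ : 1 ≤ Z) (hZD : Z ≤ D) (hND : N ≤ (D : ℤ) ^ k) :
    |(((window a N).filter fun x => KFree k x ∧ KFree k (x - a)).card : ℝ)
        - 2 * N * ∑ q ∈ Finset.Icc 1 D ×ˢ Finset.Icc 1 Z, pairTerm k a q|
      ≤ 2 * (|(a : ℝ)| + 4) * (D * Z) + 2 * N * (1 / (Z : ℝ) ^ (k - 1)) := by
  set K := |(a : ℝ)| + 4 with hK
  have hK0 : 0 ≤ K := by positivity
  set u : ℤ → ℝ := fun x => if KFree k x then 1 else 0 with hu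
  set w : ℕ → ℤ → ℝ := fun d x => if (d : ℤ) ^ k ∣ x then (μ d : ℝ) else 0 with hw
  have hux : ∀ x ∈ window a N, ∑ d ∈ Finset.Icc 1 D, w d x = u x := by
    intro x hx
    simp only [window, Finset.mem_filter, Finset.mem_Ioo] at hx
    exact sum_moebius_kfree hk hx.2.2.1 ((abs_lt.2 hx.1).le.trans hND)
  have hsplitIcc : ∀ f : ℕ → ℝ, ∑ e ∈ Finset.Icc 1 D, f e =
      ∑ e ∈ Finset.Icc 1 Z, f e + ∑ e ∈ Finset.Ioc Z D, f e := by
    intro f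
    rw [← Finset.sum_union]
    · congr 1; ext e; simp only [Finset.mem_Icc, Finset.mem_union, Finset.mem_Ioc]; omega
    · rw [Finset.disjoint_left]
      intro d h1 h2
      simp only [Finset.mem_Icc, Finset.mem_Ioc] at h1 h2
      omega
  have hua : ∀ x ∈ window a N, u (x - a) =
      ∑ e ∈ Finset.Icc 1 Z, w e (x - a) + ∑ e ∈ Finset.Ioc Z D, w e (x - a) := by
    intro x hx
    simp only [window, Finset.mem_filter, Finset.mem_Ioo] at hx
    rw [← hsplitIcc]
    exact (sum_moebius_kfree hk (sub_ne_zero.2 hx.2.2.2) (hx.2.1.le.trans hND)).symm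
  have hcard : (((window a N).filter fun x => KFree k x ∧ KFree k (x - a)).card : ℝ) =
      ∑ x ∈ window a N, u x * u (x - a) := by
    rw [Finset.card_filter]
    push_cast
    refine Finset.sum_congr rfl fun x _ => ?_
    simp only [hu]
    by_cases h1 : KFree k x <;> by_cases h2 : KFree k (x - a) <;> simp [h1, h2]
  have hdecomp : ∑ x ∈ window a N, u x * u (x - a) =
      ∑ q ∈ Finset.Icc 1 D ×ˢ Finset.Icc 1 Z,
        (μ q.1 : ℝ) * (μ q.2 : ℝ) * (pairSet k a N q.1 q.2).card
      + ∑ x ∈ window a N, u x * ∑ e ∈ Finset.Ioc Z D, w e (x - a) := by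
    have h1 : ∀ x ∈ window a N, u x * u (x - a) =
        ∑ q ∈ Finset.Icc 1 D ×ˢ Finset.Icc 1 Z, w q.1 x * w q.2 (x - a)
        + u x * ∑ e ∈ Finset.Ioc Z D, w e (x - a) := by
      intro x hx
      rw [hua x hx, mul_add, Finset.sum_product]
      dsimp only
      rw [← Finset.sum_mul_sum, hux x hx]
    rw [Finset.sum_congr rfl h1, Finset.sum_add_distrib, Finset.sum_comm]
    congr 1
    refine Finset.sum_congr rfl fun q _ => ?_
    rw [pairSet, Finset.card_filter]
    push_cast
    rw [Finset.mul_sum]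
    refine Finset.sum_congr rfl fun x _ => ?_
    simp only [hw]
    by_cases g1 : (q.1 : ℤ) ^ k ∣ x <;> by_cases g2 : (q.2 : ℤ) ^ k ∣ x - a <;> simp [g1, g2]
  have hmain : |∑ q ∈ Finset.Icc 1 D ×ˢ Finset.Icc 1 Z,
        (μ q.1 : ℝ) * (μ q.2 : ℝ) * (pairSet k a N q.1 q.2).card
      - 2 * N * ∑ q ∈ Finset.Icc 1 D ×ˢ Finset.Icc 1 Z, pairTerm k a q| ≤ K * (D * Z) := by
    rw [Finset.mul_sum, ← Finset.sum_sub_distrib]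
    refine (Finset.abs_sum_le_sum_abs _ _).trans ?_
    calc _ ≤ ∑ q ∈ Finset.Icc 1 D ×ˢ Finset.Icc 1 Z, K := by
          refine Finset.sum_le_sum fun q hq => ?_
          rw [Finset.mem_product, Finset.mem_Icc, Finset.mem_Icc] at hq
          have h := card_pairSet (k := k) hN haN (d := q.1) (e := q.2) hq.1.1 hq.2.1
          have e : (μ q.1 : ℝ) * (μ q.2 : ℝ) * (pairSet k a N q.1 q.2).card
              - 2 * N * pairTerm k a q = (μ q.1 : ℝ) * (μ q.2 : ℝ) *
              ((pairSet k a N q.1 q.2).card - 2 * N *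
                (chi k a (q.1.gcd q.2) / ((q.1 : ℝ) ^ k * (q.2 : ℝ) ^ k))) := by
            rw [pairTerm]; ring
          rw [e, abs_mul, abs_mul]
          have h1 := mul_le_one₀ (abs_moebius_real q.1) (abs_nonneg _) (abs_moebius_real q.2)
          calc _ ≤ 1 * K := by gcongr
            _ = K := one_mul K
      _ = _ := by
          rw [Finset.sum_const, Finset.card_product, Nat.card_Icc, Nat.card_Icc]
          simp; ring
  have htail : |∑ x ∈ window a N, u x * ∑ e ∈ Finset.Ioc Z D, w e (x - a)|
      ≤ K * D + 2 * N * (1 / (Z : ℝ) ^ (k - 1)) := by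
    have hN0 : (0 : ℝ) ≤ 2 * N := by
      have : (1 : ℝ) ≤ N := by exact_mod_cast hN
      linarith
    calc _ ≤ ∑ x ∈ window a N, ∑ e ∈ Finset.Ioc Z D, (if (e : ℤ) ^ k ∣ x - a then (1 : ℝ) else 0) := by
          refine (Finset.abs_sum_le_sum_abs _ _).trans (Finset.sum_le_sum fun x _ => ?_)
          rw [abs_mul]
          have h1 : |u x| ≤ 1 := by simp only [hu]; split_ifs <;> simp
          have h2 : |∑ e ∈ Finset.Ioc Z D, w e (x - a)| ≤
              ∑ e ∈ Finset.Ioc Z D, (if (e : ℤ) ^ k ∣ x - a then (1 : ℝ) else 0) := by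
            refine (Finset.abs_sum_le_sum_abs _ _).trans (Finset.sum_le_sum fun e _ => ?_)
            simp only [hw]; split_ifs
            · exact abs_moebius_real e
            · simp
          calc _ ≤ 1 * ∑ e ∈ Finset.Ioc Z D, (if (e : ℤ) ^ k ∣ x - a then (1 : ℝ) else 0) := by
                gcongr
            _ = _ := one_mul _
      _ = ∑ e ∈ Finset.Ioc Z D, ((pairSet k a N 1 e).card : ℝ) := by
          rw [Finset.sum_comm]
          refine Finset.sum_congr rfl fun e _ => ?_
          rw [pairSet, Finset.card_filter]
          push_cast
          simp
      _ ≤ ∑ e ∈ Finset.Ioc Z D, (K + 2 * N * (1 / (e : ℝ) ^ k)) := by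
          refine Finset.sum_le_sum fun e he => ?_
          have h := card_pairSet (k := k) hN haN (d := 1) (e := e) one_pos
            (by have := Finset.mem_Ioc.1 he; omega)
          simp only [Nat.gcd_one_left, chi_one, Nat.cast_one, one_pow, one_mul] at h
          linarith [(abs_le.1 h).2]
      _ ≤ _ := by
          rw [Finset.sum_add_distrib, Finset.sum_const, Nat.card_Ioc, ← Finset.mul_sum,
            nsmul_eq_mul, mul_comm _ K]
          gcongr
          · omega
          · exact sum_Ioc_inv_pow_le hk hZ D
  rw [hcard, hdecomp]
  have hDZ : K * D ≤ K * (D * Z) := by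
    have : (1 : ℝ) ≤ Z := by exact_mod_cast hZ
    gcongr
    exact le_mul_of_one_le_right (by positivity) this
  rw [abs_le] at hmain htail ⊢
  constructor <;> linarith [hmain.1, hmain.2, htail.1, htail.2]

/-! ### The error term -/

/-- Replacing `R` by `⌈R⌉` and removing `0` and `a`, which fail one of the two conditions, does not
change the set. -/
theorem ncard_eq (k : ℕ) (a : ℤ) (R : ℝ) :
    {x : ℤ | |(x : ℝ)| < R ∧ |((x - a : ℤ) : ℝ)| < R ∧ KFree k x ∧ KFree k (x - a)}.ncard =
      (open Classical in
        ((window a ⌈R⌉).filter fun x => KFree k x ∧ KFree k (x - a)).card) := by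
  classical
  have h0 : ¬ KFree k 0 := fun h => h 2 (by norm_num) (dvd_zero _)
  have habs : ∀ y : ℤ, |(y : ℝ)| < R ↔ |y| < ⌈R⌉ := by
    intro y; rw [Int.lt_ceil]; push_cast; rfl
  rw [← Set.ncard_coe_finset]
  congr 1
  ext x
  simp only [Set.mem_ofPred_eq, Finset.coe_filter, window, Finset.mem_filter, Finset.mem_Ioo, habs]
  constructor
  · rintro ⟨h1, h2, h3, h4⟩
    refine ⟨⟨abs_lt.1 h1, h2, ?_, ?_⟩, h3, h4⟩
    · rintro rfl; exact h0 h3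
    · rintro rfl; exact h0 (by simpa using h4)
  · rintro ⟨⟨h1, h2, -, -⟩, h3, h4⟩
    exact ⟨abs_lt.2 h1, h2, h3, h4⟩

theorem ceil_le_two_mul {y : ℝ} (hy : 1 ≤ y) : (⌈y⌉₊ : ℝ) ≤ 2 * y := by
  linarith [Nat.ceil_lt_add_one (by linarith : 0 ≤ y)]

/-- The error estimate: `D ≈ R^(1/k)` makes the Möbius sums exact, and `Z ≈ R^((k-1)/k²)` balances
the number `D Z` of pairs against the tail `R Z^(1-k)`; both are `R^(2/k - 1/k²)`. -/
theorem error_bound {k : ℕ} (hk : 2 ≤ k) {a : ℤ} (ha : a ≠ 0) {R : ℝ} (hR : 1 ≤ R)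
    (haR : |(a : ℝ)| ≤ R) :
    |({x : ℤ | |(x : ℝ)| < R ∧ |((x - a : ℤ) : ℝ)| < R ∧
        KFree k x ∧ KFree k (x - a)}.ncard : ℝ) / (2 * R) - ∑' q : ℕ × ℕ, pairTerm k a q|
      ≤ (12 * |(a : ℝ)| + 18 + 4 * |∑' q : ℕ × ℕ, pairTerm k a q|) *
          R ^ (-1 + 2 / (k : ℝ) - 1 / (k : ℝ) ^ 2) := by
  classical
  set e : ℝ := -1 + 2 / (k : ℝ) - 1 / (k : ℝ) ^ 2 with he
  have hk' : (2 : ℝ) ≤ k := by exact_mod_cast hk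
  have hk0 : (k : ℝ) ≠ 0 := by linarith
  have hR0 : 0 < R := by linarith
  set N : ℤ := ⌈R⌉ with hN
  set D : ℕ := ⌈R ^ (1 / (k : ℝ))⌉₊ with hD
  set β : ℝ := ((k : ℝ) - 1) / (k : ℝ) ^ 2 with hβ
  set Z : ℕ := ⌈R ^ β⌉₊ with hZ
  have hβ0 : 0 ≤ β := div_nonneg (by linarith) (by positivity)
  have hβα : β ≤ 1 / (k : ℝ) := by
    rw [hβ, div_le_div_iff₀ (by positivity) (by positivity)]; nlinarith
  have hRα1 : 1 ≤ R ^ (1 / (k : ℝ)) := Real.one_le_rpow hR (by positivity)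
  have hRβ1 : 1 ≤ R ^ β := Real.one_le_rpow hR hβ0
  have hZ1 : 1 ≤ Z := Nat.one_le_ceil_iff.2 (by linarith)
  have hZD : Z ≤ D := Nat.ceil_mono (Real.rpow_le_rpow_of_exponent_le hR hβα)
  have hN1 : 1 ≤ N := Int.one_le_ceil_iff.2 hR0
  have haN : |a| ≤ N := by
    have h : |(a : ℝ)| ≤ (N : ℝ) := haR.trans (Int.le_ceil R)
    exact_mod_cast h
  have hRD : R ≤ ((D : ℤ) ^ k : ℤ) := by
    push_cast
    calc R = (R ^ (1 / (k : ℝ))) ^ k := by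
          rw [one_div, Real.rpow_inv_natCast_pow hR0.le (by omega)]
      _ ≤ (D : ℝ) ^ k := by gcongr; exact Nat.le_ceil _
  have hND : N ≤ (D : ℤ) ^ k := Int.ceil_le.2 hRD
  have hmain := abs_card_sub_le hk hN1 haN hZ1 hZD hND
  have htail := abs_tsum_pairTerm_sub_le hk ha hZ1 hZD
  rw [ncard_eq, ← hN]
  have ht : 1 / (Z : ℝ) ^ (k - 1) ≤ R ^ e := by
    have h1 : (R ^ β) ^ (k - 1) ≤ (Z : ℝ) ^ (k - 1) := by gcongr; exact Nat.le_ceil _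
    calc 1 / (Z : ℝ) ^ (k - 1) ≤ 1 / (R ^ β) ^ (k - 1) := by gcongr
      _ = R ^ e := by
        rw [← Real.rpow_natCast, ← Real.rpow_mul hR0.le, one_div, ← Real.rpow_neg hR0.le]
        congr 1
        rw [Nat.cast_sub (by omega), he, hβ]
        push_cast
        field_simp
        ring
  have hDZ : (D : ℝ) * Z ≤ 4 * (R * R ^ e) := by
    calc (D : ℝ) * Z ≤ (2 * R ^ (1 / (k : ℝ))) * (2 * R ^ β) :=
          mul_le_mul (ceil_le_two_mul hRα1) (ceil_le_two_mul hRβ1) (by positivity) (by positivity)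
      _ = 4 * (R ^ (1 / (k : ℝ)) * R ^ β) := by ring
      _ = 4 * (R * R ^ e) := by
        rw [← Real.rpow_add hR0, ← Real.rpow_one_add' hR0.le]
        · congr 2
          rw [he, hβ]; field_simp; ring
        · have : 1 + e = 1 / (k : ℝ) + β := by rw [he, hβ]; field_simp; ring
          rw [this]; positivity
  have hDZ1 : (1 : ℝ) ≤ D * Z := by exact_mod_cast Nat.mul_pos (hZ1.trans hZD) hZ1
  have hNR : (N : ℝ) ≤ 2 * R := by linarith [Int.ceil_lt_add_one R]
  have hNR1 : R ≤ N := Int.le_ceil R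
  have hNR2 : (N : ℝ) ≤ R + 1 := (Int.ceil_lt_add_one R).le
  set W : ℝ := (((window a N).filter fun x => KFree k x ∧ KFree k (x - a)).card : ℝ)
  set S := ∑' q : ℕ × ℕ, pairTerm k a q
  set T := ∑ q ∈ Finset.Icc 1 D ×ˢ Finset.Icc 1 Z, pairTerm k a q
  set t := 1 / (Z : ℝ) ^ (k - 1)
  have ht0 : 0 ≤ t := by positivity
  have hE : 0 ≤ R ^ e := by positivity
  have hA := abs_nonneg (a : ℝ)
  have hS := abs_nonneg S
  have hNt : N * t ≤ 2 * (R * R ^ e) := by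
    calc N * t ≤ (2 * R) * R ^ e := mul_le_mul hNR ht ht0 (by positivity)
      _ = _ := by ring
  have hbound : |W - 2 * R * S| ≤
      2 * (|(a : ℝ)| + 4) * (D * Z) + 2 * (N * t) + 8 * |(a : ℝ)| * (N * t) + 2 * |S| := by
    have e1 : W - 2 * R * S = (W - 2 * N * T) + (-(2 * N * (S - T)) + 2 * (N - R) * S) := by ring
    have b1 : |2 * N * (S - T)| ≤ 8 * |(a : ℝ)| * (N * t) := by
      rw [abs_mul, abs_of_nonneg (by linarith : (0 : ℝ) ≤ 2 * N)]
      calc 2 * N * |S - T| ≤ 2 * N * (4 * |(a : ℝ)| * t) := by gcongr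
        _ = _ := by ring
    have b2 : |2 * (N - R) * S| ≤ 2 * |S| := by
      rw [abs_mul, abs_of_nonneg (by linarith : (0 : ℝ) ≤ 2 * (N - R))]
      gcongr; linarith
    rw [e1]
    have c1 := abs_add_le (W - 2 * N * T) (-(2 * N * (S - T)) + 2 * (N - R) * S)
    have c2 := abs_add_le (-(2 * N * (S - T))) (2 * (N - R) * S)
    rw [abs_neg] at c2
    linarith
  have hfinal : |W - 2 * R * S| ≤ (12 * |(a : ℝ)| + 18 + 4 * |S|) * R ^ e * (2 * R) := by
    have d1 : 2 * (|(a : ℝ)| + 4) * (D * Z) ≤ 2 * (|(a : ℝ)| + 4) * (4 * (R * R ^ e)) := by gcongr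
    have d2 : 8 * |(a : ℝ)| * (N * t) ≤ 8 * |(a : ℝ)| * (2 * (R * R ^ e)) := by gcongr
    have d3 : 2 * |S| * 1 ≤ 2 * |S| * (4 * (R * R ^ e)) := by gcongr; linarith
    nlinarith
  have e2 : W / (2 * R) - S = (W - 2 * R * S) / (2 * R) := by field_simp
  rw [e2, abs_div, abs_of_pos (by linarith : 0 < 2 * R), div_le_iff₀ (by linarith)]
  exact hfinal

end KFreeCorrelation

/-- For `k ≥ 2` and `a ≠ 0`, the autocorrelation coefficient `w(a)` of the set `F` of
`k`-th-power-free integers exists and equals `ξ(k) · ∏_{p^k | a} (1 + 1/(p^k − 2))`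
(the product over primes `p` with `p^k ∣ a`), with error term `O(R^(−1+2/k−1/k²))`. -/
theorem stmt_10 (k : ℕ) (hk : 2 ≤ k) (a : ℤ) (ha : a ≠ 0) :
    Filter.Tendsto
      (fun R : ℝ =>
        (({x : ℤ | |(x : ℝ)| < R ∧ |((x - a : ℤ) : ℝ)| < R ∧
            KFree k x ∧ KFree k (x - a)}).ncard : ℝ) / (2 * R))
      Filter.atTop
      (nhds (xiN k *
        ∏ p ∈ a.natAbs.primeFactors.filter (fun p : ℕ => (p : ℤ) ^ k ∣ a),
          (1 + 1 / ((p : ℝ) ^ k - 2)))) ∧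
    ∃ C R₀ : ℝ, ∀ R : ℝ, R₀ ≤ R →
      |(({x : ℤ | |(x : ℝ)| < R ∧ |((x - a : ℤ) : ℝ)| < R ∧
            KFree k x ∧ KFree k (x - a)}).ncard : ℝ) / (2 * R)
        - xiN k *
            ∏ p ∈ a.natAbs.primeFactors.filter (fun p : ℕ => (p : ℤ) ^ k ∣ a),
              (1 + 1 / ((p : ℝ) ^ k - 2))|
        ≤ C * R ^ (-1 + 2 / (k : ℝ) - 1 / (k : ℝ) ^ 2) := by
  have hlim := KFreeCorrelation.tsum_pairTerm hk ha
  rw [← xiN] at hlim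
  rw [← hlim]
  have hbound : ∀ R : ℝ, max 1 |(a : ℝ)| ≤ R → _ := fun R hR =>
    KFreeCorrelation.error_bound hk ha (le_of_max_le_left hR) (le_of_max_le_right hR)
  refine ⟨?_, _, _, hbound⟩
  have hk' : (2 : ℝ) ≤ k := by exact_mod_cast hk
  -- the exponent is `-((k-1)/k)²`, hence negative
  have hexp : 0 < 1 - 2 / (k : ℝ) + 1 / (k : ℝ) ^ 2 := by
    have : 1 - 2 / (k : ℝ) + 1 / (k : ℝ) ^ 2 = (1 - 1 / (k : ℝ)) ^ 2 := by ring
    rw [this]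
    have : 1 / (k : ℝ) < 1 := by rw [div_lt_one (by linarith)]; linarith
    have : 0 < 1 - 1 / (k : ℝ) := by linarith
    positivity
  have h0 := (tendsto_rpow_neg_atTop hexp).const_mul
    (12 * |(a : ℝ)| + 18 + 4 * |∑' q : ℕ × ℕ, KFreeCorrelation.pairTerm k a q|)
  rw [mul_zero] at h0
  refine tendsto_iff_norm_sub_tendsto_zero.2 (squeeze_zero' ?_ ?_ h0)
  · exact Filter.Eventually.of_forall fun _ => norm_nonneg _
  · filter_upwards [Filter.eventually_ge_atTop (max 1 |(a : ℝ)|)] with R hR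
    have := hbound R hR
    rwa [show -(1 - 2 / (k : ℝ) + 1 / (k : ℝ) ^ 2) = -1 + 2 / (k : ℝ) - 1 / (k : ℝ) ^ 2 by ring]
end

section
/- Fix an integer k ≥ 2 and let F be the set of k-th-power-free integers. Then F − F = ℤ, i.e. every integer is the difference of two k-th-power-free integers. -/
/-- The correction term `1 / (4 (J + 2))` is the tail of the telescoping series
`∑ 1/((2j+3)² - 1) = ∑ (1/(j+1) - 1/(j+2)) / 4`. -/
lemma sum_inv_odd_sq_le (J : ℕ) :
    ∑ j ∈ Finset.range (J + 1), (1 : ℚ) / (2 * j + 3) ^ 2 ≤ 17 / 72 - 1 / (4 * ((J : ℚ) + 2)) := by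
  induction J with
  | zero => norm_num
  | succ J ih =>
    rw [Finset.sum_range_succ]
    have h : (1 : ℚ) / (2 * ((J + 1 : ℕ) : ℚ) + 3) ^ 2
        ≤ 1 / (4 * (J + 2)) - 1 / (4 * (((J + 1 : ℕ) : ℚ) + 2)) := by
      have e : (1 : ℚ) / (4 * (J + 2)) - 1 / (4 * (((J + 1 : ℕ) : ℚ) + 2))
          = 1 / (4 * (J + 2) * (J + 3)) := by
        push_cast
        field_simp
        ring
      rw [e]
      apply one_div_le_one_div_of_le (by positivity)
      push_cast
      nlinarith
    linarith

lemma card_not_squarefree_le (N : ℕ) :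
    (((Finset.Ioc 0 N).filter (fun m => ¬ Squarefree m)).card : ℚ) ≤ 35 / 72 * N := by
  have hsub : (Finset.Ioc 0 N).filter (fun m => ¬ Squarefree m) ⊆
      (Finset.Ioc 0 N).filter (fun m => 4 ∣ m) ∪
        (Finset.range (N + 1)).biUnion
          (fun j => (Finset.Ioc 0 N).filter (fun m => (2 * j + 3) ^ 2 ∣ m)) := by
    intro m hm
    obtain ⟨hmN, hm⟩ := Finset.mem_filter.1 hm
    rw [Nat.squarefree_iff_prime_squarefree] at hm
    push Not at hm
    obtain ⟨p, hp, hpm⟩ := hm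
    rw [Finset.mem_union, Finset.mem_biUnion]
    rcases hp.eq_two_or_odd' with rfl | ⟨i, hi⟩
    · exact Or.inl (Finset.mem_filter.2 ⟨hmN, hpm⟩)
    · right
      have h2 := hp.two_le
      obtain ⟨h0, hN⟩ := Finset.mem_Ioc.1 hmN
      have hle := Nat.le_of_dvd h0 hpm
      refine ⟨i - 1, Finset.mem_range.2 (by nlinarith [Nat.sub_le i 1]),
        Finset.mem_filter.2 ⟨hmN, ?_⟩⟩
      have : 2 * (i - 1) + 3 = p := by omega
      rw [this, sq]
      exact hpm
  have hdiv (r : ℕ) : (((Finset.Ioc 0 N).filter (fun m => r ∣ m)).card : ℚ) ≤ N * (1 / r) := by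
    rw [Nat.Ioc_filter_dvd_card_eq_div, mul_one_div]
    exact Nat.cast_div_le
  have hcard := (Finset.card_le_card hsub).trans ((Finset.card_union_le _ _).trans
    (Nat.add_le_add_left Finset.card_biUnion_le _))
  have hcardQ : (((Finset.Ioc 0 N).filter (fun m => ¬ Squarefree m)).card : ℚ) ≤
      ((Finset.Ioc 0 N).filter (fun m => 4 ∣ m)).card +
        ∑ j ∈ Finset.range (N + 1),
          (((Finset.Ioc 0 N).filter (fun m => (2 * j + 3) ^ 2 ∣ m)).card : ℚ) := by
    exact_mod_cast hcard
  have h4 := hdiv 4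
  have hodd : ∑ j ∈ Finset.range (N + 1),
      (((Finset.Ioc 0 N).filter (fun m => (2 * j + 3) ^ 2 ∣ m)).card : ℚ) ≤
      N * ∑ j ∈ Finset.range (N + 1), (1 : ℚ) / (2 * j + 3) ^ 2 := by
    rw [Finset.mul_sum]
    refine Finset.sum_le_sum fun j _ => ?_
    exact_mod_cast hdiv ((2 * j + 3) ^ 2)
  have hsum : ∑ j ∈ Finset.range (N + 1), (1 : ℚ) / (2 * j + 3) ^ 2 ≤ 17 / 72 := by
    have hpos : (0 : ℚ) ≤ 1 / (4 * (N + 2)) := by positivity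
    linarith [sum_inv_odd_sq_le N]
  have := mul_le_mul_of_nonneg_left hsum (Nat.cast_nonneg (α := ℚ) N)
  push_cast at h4
  linarith

lemma exists_squarefree_pair (n : ℕ) : ∃ m : ℕ, Squarefree m ∧ Squarefree (m + n) := by
  by_contra! h
  -- The density bound yields `72 N ≤ 35 (2 N + n)`, which fails as soon as `2 N > 35 n`.
  set N := 18 * n + 1 with hN
  have hsub : Finset.Ioc 0 N ⊆ (Finset.Ioc 0 N).filter (fun m => ¬ Squarefree m) ∪
      ((Finset.Ioc 0 (N + n)).filter (fun m => ¬ Squarefree m)).preimage (· + n)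
        (add_left_injective n).injOn := by
    intro m hm
    have hm' := Finset.mem_Ioc.1 hm
    rw [Finset.mem_union, Finset.mem_preimage, Finset.mem_filter, Finset.mem_filter,
      Finset.mem_Ioc, Finset.mem_Ioc]
    by_cases hs : Squarefree m
    · exact Or.inr ⟨by omega, h m hs⟩
    · exact Or.inl ⟨hm', hs⟩
  have hcard := (Finset.card_le_card hsub).trans (Finset.card_union_le _ _)
  have hpre : (((Finset.Ioc 0 (N + n)).filter (fun m => ¬ Squarefree m)).preimage (· + n)
      (add_left_injective n).injOn).card ≤
      ((Finset.Ioc 0 (N + n)).filter (fun m => ¬ Squarefree m)).card :=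
    Finset.card_le_card_of_injOn (· + n) (by
      intro m hm
      rw [Finset.mem_coe, Finset.mem_preimage] at hm
      exact hm)
      (add_left_injective n).injOn
  rw [Nat.card_Ioc, Nat.sub_zero] at hcard
  have hq : (N : ℚ) ≤ ((Finset.Ioc 0 N).filter (fun m => ¬ Squarefree m)).card +
      ((Finset.Ioc 0 (N + n)).filter (fun m => ¬ Squarefree m)).card := by
    exact_mod_cast hcard.trans (Nat.add_le_add_left hpre _)
  have h1 := card_not_squarefree_le N
  have h2 := card_not_squarefree_le (N + n)
  have hNq : (N : ℚ) = 18 * n + 1 := by rw [hN]; push_cast; rfl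
  have hn : (0 : ℚ) ≤ n := Nat.cast_nonneg n
  push_cast at h2
  linarith

lemma kFree_of_squarefree {k : ℕ} (hk : 2 ≤ k) {m : ℕ} (hm : Squarefree m) :
    KFree k (m : ℤ) := by
  intro d hd hdvd
  have hu := Int.squarefree_natCast.2 hm d (by
    rw [← sq]
    exact (pow_dvd_pow d hk).trans hdvd)
  rcases Int.isUnit_iff.1 hu with h | h <;> omega

/-- For `k ≥ 2`, `F − F = ℤ`: every integer is the difference of two
`k`-th-power-free integers. -/
theorem stmt_11 (k : ℕ) (hk : 2 ≤ k) :
    ∀ z : ℤ, ∃ x y : ℤ, KFree k x ∧ KFree k y ∧ z = x - y := by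
  intro z
  obtain ⟨m, hm, hmn⟩ := exists_squarefree_pair z.natAbs
  have h1 := kFree_of_squarefree hk hm
  have h2 := kFree_of_squarefree hk hmn
  rcases le_total 0 z with hz | hz
  · exact ⟨_, _, h2, h1, by omega⟩
  · exact ⟨_, _, h1, h2, by omega⟩
end

section
/- Let n ≥ 2 be an integer and let d be a squarefree positive integer. Then the series ∑_{l=1}^∞ μ(ld)/(ld)^n converges absolutely and equals (μ(d)/ζ(n)) · ∏_{p | d} 1/(p^n − 1), where the product is over the primes p dividing d. -/
/-!
Write `f(m) = μ(m) / mⁿ` and `T(d) = ∑_l f(l d)`. For `d = 1` this is the Dirichlet series of `μ`,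
so `T(1) = 1 / ζ(n)` (`tsum_moebius_div_pow`). If `p` is a prime not dividing `d`, then
`f(l p d) = 0` when `p ∣ l`, and `f(l p d) = -p⁻ⁿ f(l d)` otherwise; hence
`pⁿ f(l p d) = -(f(l d) - [p ∣ l] f(l d))` for every `l`. The terms with `p ∣ l` sum to
`T(p d)`, so that `pⁿ T(p d) = T(p d) - T(d)`, that is, `T(p d) = -T(d) / (pⁿ - 1)`
(`tsum_moebiusTerm_prime_mul`). Induction on the prime factors of `d` gives the formula.
-/

/-- The Riemann zeta function at an integer argument `n`, as the Dirichlet series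
`ζ(n) = ∑_{m ≥ 1} 1/mⁿ`. -/
noncomputable def zetaNat (n : ℕ) : ℝ := ∑' m : ℕ+, (1 : ℝ) / ((m : ℕ) : ℝ) ^ n

/-- The term `μ(m) / mⁿ` of the Dirichlet series of `μ`; it is `0` at `m = 0`, as `μ(0) = 0`. -/
noncomputable def moebiusTerm (n m : ℕ) : ℝ :=
  (ArithmeticFunction.moebius m : ℝ) / (m : ℝ) ^ n

lemma summable_abs_moebiusTerm {n : ℕ} (hn : 2 ≤ n) :
    Summable (fun m : ℕ => |moebiusTerm n m|) := by
  refine Summable.of_nonneg_of_le (fun m => abs_nonneg _) (fun m => ?_)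
    (Real.summable_one_div_nat_pow.mpr (show 1 < n by omega))
  have h : |(ArithmeticFunction.moebius m : ℝ)| ≤ 1 := by
    exact_mod_cast ArithmeticFunction.abs_moebius_le_one (n := m)
  rw [moebiusTerm, abs_div, abs_of_nonneg (by positivity : (0 : ℝ) ≤ (m : ℝ) ^ n)]
  gcongr

lemma summable_abs_moebiusTerm_mul {n : ℕ} (hn : 2 ≤ n) {d : ℕ} (hd : d ≠ 0) :
    Summable (fun l : ℕ => |moebiusTerm n (l * d)|) :=
  (summable_abs_moebiusTerm hn).comp_injective (mul_left_injective₀ hd)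

lemma ofReal_zetaNat {n : ℕ} (hn : 2 ≤ n) : ((zetaNat n : ℝ) : ℂ) = riemannZeta n := by
  have h : zetaNat n = ∑' m : ℕ, (1 : ℝ) / (m : ℝ) ^ n := by
    refine PNat.coe_injective.tsum_eq (f := fun m : ℕ => (1 : ℝ) / (m : ℝ) ^ n) ?_
    intro m hm
    -- The term at `0` is the junk value `1 / 0 = 0`, so the support lies in `ℕ+`.
    have h0 : m ≠ 0 := by
      rintro rfl
      simp [show n ≠ 0 by omega] at hm
    exact ⟨⟨m, Nat.pos_of_ne_zero h0⟩, rfl⟩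
  rw [zeta_nat_eq_tsum_of_gt_one (by omega), h, Complex.ofReal_tsum]
  push_cast
  rfl

lemma tsum_moebius_div_pow {n : ℕ} (hn : 2 ≤ n) :
    ∑' m : ℕ, moebiusTerm n m = 1 / zetaNat n := by
  have hs : 1 < ((n : ℂ)).re := by
    rw [Complex.natCast_re]
    exact_mod_cast (show 1 < n by omega)
  have h := ArithmeticFunction.LSeries_zeta_mul_Lseries_moebius hs
  rw [ArithmeticFunction.LSeries_zeta_eq_riemannZeta hs, ← ofReal_zetaNat hn] at h
  have hL : LSeries (fun m => ((ArithmeticFunction.moebius m : ℤ) : ℂ)) n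
      = ((∑' m : ℕ, moebiusTerm n m : ℝ) : ℂ) := by
    rw [LSeries, Complex.ofReal_tsum]
    refine tsum_congr fun m => ?_
    rcases eq_or_ne m 0 with rfl | hm
    · simp [moebiusTerm]
    · rw [LSeries.term_of_ne_zero hm, Complex.cpow_natCast, moebiusTerm]
      push_cast
      rfl
  rw [hL] at h
  have h' : zetaNat n * ∑' m : ℕ, moebiusTerm n m = 1 := by exact_mod_cast h
  exact eq_one_div_of_mul_eq_one_right h'

/-- Passing from `d` to `p d` with `p ∤ d` multiplies the sum over multiples by
`-1 / (pⁿ - 1)`. -/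
lemma tsum_moebiusTerm_prime_mul {n : ℕ} (hn : 2 ≤ n) {p d : ℕ} (hp : p.Prime) (hd : d ≠ 0)
    (hpd : p.Coprime d) :
    ∑' l : ℕ, moebiusTerm n (l * (p * d))
      = -(1 / ((p : ℝ) ^ n - 1)) * ∑' l : ℕ, moebiusTerm n (l * d) := by
  have hp0 : (p : ℝ) ≠ 0 := by exact_mod_cast hp.ne_zero
  have hp1 : (1 : ℝ) < (p : ℝ) ^ n := by
    exact one_lt_pow₀ (by exact_mod_cast hp.one_lt) (by omega)
  have hsd : Summable fun l : ℕ => moebiusTerm n (l * d) :=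
    (summable_abs_moebiusTerm_mul hn hd).of_abs
  have hinj : Function.Injective fun k : ℕ => k * p := mul_left_injective₀ hp.ne_zero
  set g : ℕ → ℝ := fun l => if p ∣ l then moebiusTerm n (l * d) else 0 with hg
  have hgsum : Summable g := by
    refine Summable.of_norm_bounded hsd.abs fun l => ?_
    simp only [hg]
    split_ifs <;> simp
  have hgt : ∑' l, g l = ∑' l : ℕ, moebiusTerm n (l * (p * d)) := by
    rw [← hinj.tsum_eq (f := g)]
    · refine tsum_congr fun k => ?_
      simp [hg, mul_assoc]
    · intro l hl
      by_cases h : p ∣ l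
      · obtain ⟨k, rfl⟩ := h
        exact ⟨k, mul_comm _ _⟩
      · simp [hg, h] at hl
  have hpt : ∀ l : ℕ, (p : ℝ) ^ n * moebiusTerm n (l * (p * d))
      = g l - moebiusTerm n (l * d) := by
    intro l
    by_cases h : p ∣ l
    · have hsq : ¬ Squarefree (l * (p * d)) := by
        intro hs
        obtain ⟨k, rfl⟩ := h
        exact hp.not_isUnit (hs p ⟨k * d, by ring⟩)
      simp [hg, h, moebiusTerm, ArithmeticFunction.moebius_eq_zero_of_not_squarefree hsq]
    · have hc : p.Coprime (l * d) := ((Nat.Prime.coprime_iff_not_dvd hp).2 h).mul_right hpd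
      have hm : ArithmeticFunction.moebius (l * (p * d))
          = -ArithmeticFunction.moebius (l * d) := by
        rw [show l * (p * d) = p * (l * d) by ring,
          ArithmeticFunction.isMultiplicative_moebius.map_mul_of_coprime hc,
          ArithmeticFunction.moebius_apply_prime hp, neg_one_mul]
      simp only [hg, h, if_false, moebiusTerm, hm]
      push_cast
      rw [show (l : ℝ) * (p * d) = p * (l * d) by ring, mul_pow (p : ℝ)]
      field_simp
      ring
  have key : (p : ℝ) ^ n * ∑' l : ℕ, moebiusTerm n (l * (p * d))
      = ∑' l : ℕ, moebiusTerm n (l * (p * d)) - ∑' l : ℕ, moebiusTerm n (l * d) := by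
    rw [← tsum_mul_left, tsum_congr hpt, hgsum.tsum_sub hsd, hgt]
  have hne : (p : ℝ) ^ n - 1 ≠ 0 := by linarith
  field_simp
  linarith

lemma tsum_moebiusTerm_mul {n : ℕ} (hn : 2 ≤ n) (d : ℕ) (hd : Squarefree d) :
    ∑' l : ℕ, moebiusTerm n (l * d)
      = ((ArithmeticFunction.moebius d : ℝ) / zetaNat n)
          * ∏ p ∈ d.primeFactors, (1 / ((p : ℝ) ^ n - 1)) := by
  induction d using induction_on_primes with
  | zero => exact absurd hd not_squarefree_zero
  | one => simpa using tsum_moebius_div_pow hn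
  | prime_mul p d hp ih =>
    obtain ⟨hc, -, hd'⟩ := Nat.squarefree_mul_iff.1 hd
    rw [tsum_moebiusTerm_prime_mul hn hp hd'.ne_zero hc, ih hd',
      ArithmeticFunction.isMultiplicative_moebius.map_mul_of_coprime hc,
      ArithmeticFunction.moebius_apply_prime hp, hc.primeFactors_mul,
      Finset.prod_union hc.disjoint_primeFactors, hp.primeFactors, Finset.prod_singleton]
    push_cast
    ring

/-- For `n ≥ 2` and squarefree `d`, the series `∑_{l ≥ 1} μ(ld)/(ld)ⁿ` converges
absolutely and equals `(μ(d)/ζ(n)) · ∏_{p | d} 1/(pⁿ − 1)`. -/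
theorem stmt_14 (n : ℕ) (hn : 2 ≤ n) (d : ℕ) (hd : Squarefree d) :
    Summable (fun l : ℕ =>
        |(ArithmeticFunction.moebius (l * d) : ℝ) / ((l * d : ℕ) : ℝ) ^ n|) ∧
    ∑' l : ℕ, (ArithmeticFunction.moebius (l * d) : ℝ) / ((l * d : ℕ) : ℝ) ^ n
      = ((ArithmeticFunction.moebius d : ℝ) / zetaNat n)
          * ∏ p ∈ d.primeFactors, (1 / ((p : ℝ) ^ n - 1)) :=
  ⟨summable_abs_moebiusTerm_mul hn hd.ne_zero, tsum_moebiusTerm_mul hn d hd⟩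
end

section
/- For each j ∈ ℤ⁺ let S_j be a countable subset of ℝ^n and w_j : ℝ^n → ℂ a function vanishing outside S_j, and define the local norm ‖ν_j‖_loc = sup_K ∑_{x ∈ S_j ∩ K} |w_j(x)|, the supremum being over all compact sets K ⊂ ℝ^n of diameter < 1. Suppose ∑_{j=1}^∞ ‖ν_j‖_loc < ∞. Then: (i) for every Schwartz function ψ on ℝ^n, the double series ∑_{j=1}^∞ ∑_{x ∈ S_j} w_j(x) ψ(x) converges absolutely; (ii) setting S = ⋃_j S_j and w(x) = ∑_{j=1}^∞ w_j(x) for x ∈ S (an absolutely convergent sum), one has ∑_{j=1}^∞ ∑_{x ∈ S_j} w_j(x) ψ(x) = ∑_{x ∈ S} w(x) ψ(x) for every Schwartz function ψ; and (iii) the limit measure is translation bounded: for every compact K ⊂ ℝ^n of diameter < 1 and every a ∈ ℝ^n, ∑_{x ∈ S ∩ (K + a)} |w(x)| ≤ ∑_{j=1}^∞ ‖ν_j‖_loc. -/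
/-!
The heart of the matter is a bound on the positive function `F x = ∑ j, |w j x|`. Exchanging sums
shows that `F` has mass at most `M = ∑ j, ‖ν_j‖_loc` on every compact set of diameter `< 1`
(`tsum_enorm_le_of_compact`); singletons give the pointwise convergence, and translates of `K`
give translation boundedness.

For Schwartz `ψ`, rapid decay reduces matters to `∑ x, F x * g x < ∞` with
`g x = (1 + |x|) ^ (-(n + 1))`. Rather than tiling space, one averages over balls: `g` varies by a
bounded factor on balls of radius `1/4`, so `g x` is at most a constant times the integral of `g`
over the ball around `x`. By Tonelli the sum is then at most a constant times
`∫ g(y) F(closedBall y (1/4)) dy ≤ M ∫ g < ∞` (`tsum_mul_decay_ne_top`).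
Hence `w j x * ψ x` is absolutely summable over `ℕ × ℝⁿ`, which yields both the absolute
convergence of the double series and the exchange of summations.
-/

open scoped ENNReal

/-- The local norm `‖ν_j‖_loc` of the weighted Dirac comb with weights `w` supported on `S`:
the supremum over compact sets `K` of diameter `< 1` of `∑_{x ∈ S ∩ K} |w(x)|`
(computed in `ℝ≥0∞`). -/
noncomputable def locNorm {n : ℕ} (S : Set (EuclideanSpace ℝ (Fin n)))
    (w : EuclideanSpace ℝ (Fin n) → ℂ) : ℝ≥0∞ :=
  ⨆ K : {K : Set (EuclideanSpace ℝ (Fin n)) // IsCompact K ∧ Metric.diam K < 1},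
    ∑' x : ↥(S ∩ K.1), (‖w x‖₊ : ℝ≥0∞)

open MeasureTheory

/-- The weight `(1 + |x|) ^ (-(n + 1))`, an integrable function on `ℝⁿ`. -/
noncomputable def decayWeight {n : ℕ} (x : EuclideanSpace ℝ (Fin n)) : ℝ≥0∞ :=
  ENNReal.ofReal ((1 + ‖x‖) ^ (-((n : ℝ) + 1)))

lemma tsum_enorm_le_of_compact {n : ℕ} {S : ℕ → Set (EuclideanSpace ℝ (Fin n))}
    {w : ℕ → EuclideanSpace ℝ (Fin n) → ℂ} (hw : ∀ j x, x ∉ S j → w j x = 0)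
    {K : Set (EuclideanSpace ℝ (Fin n))} (hK : IsCompact K) (hd : Metric.diam K < 1) :
    ∑' x : K, ∑' j, ‖w j x‖ₑ ≤ ∑' j, locNorm (S j) (w j) := by
  rw [ENNReal.tsum_comm]
  refine ENNReal.tsum_le_tsum fun j => ?_
  refine le_trans (le_of_eq ?_) (le_iSup (fun K : {K : Set (EuclideanSpace ℝ (Fin n)) //
    IsCompact K ∧ Metric.diam K < 1} => ∑' x : ↥(S j ∩ K.1), (‖w j x‖₊ : ℝ≥0∞)) ⟨K, hK, hd⟩)
  change ∑' x : K, (fun x => ‖w j x‖ₑ) x = ∑' x : ↥(S j ∩ K), (fun x => ‖w j x‖ₑ) x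
  rw [tsum_subtype K fun x => ‖w j x‖ₑ, tsum_subtype (S j ∩ K) fun x => ‖w j x‖ₑ]
  refine tsum_congr fun x => ?_
  by_cases hx : x ∈ S j <;> by_cases hxK : x ∈ K <;> simp [hx, hxK, hw j x]

lemma decayWeight_le {n : ℕ} {x y : EuclideanSpace ℝ (Fin n)} (h : dist x y ≤ 1 / 4) :
    decayWeight x ≤ ENNReal.ofReal (2 ^ ((n : ℝ) + 1)) * decayWeight y := by
  unfold decayWeight
  rw [← ENNReal.ofReal_mul (by positivity)]
  refine ENNReal.ofReal_le_ofReal ?_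
  have hx : 0 < 1 + ‖x‖ := by positivity
  have hy : 0 < 1 + ‖y‖ := by positivity
  have hyx : 1 + ‖y‖ ≤ 2 * (1 + ‖x‖) := by
    have := norm_le_norm_add_norm_sub' y x
    rw [← dist_eq_norm, dist_comm] at this
    have := norm_nonneg x
    linarith
  have hd : (0 : ℝ) ≤ (n : ℝ) + 1 := by positivity
  have h1 := Real.rpow_le_rpow hy.le hyx hd
  rw [Real.mul_rpow (by norm_num) hx.le] at h1
  rw [Real.rpow_neg hx.le, Real.rpow_neg hy.le, ← div_eq_mul_inv, le_div_iff₀ (by positivity),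
    inv_mul_le_iff₀ (by positivity), mul_comm]
  exact h1

/-- A weight whose mass on balls of radius `1/4` is uniformly bounded is summable against
`decayWeight`: average over balls and apply Tonelli. -/
lemma tsum_mul_decay_ne_top {n : ℕ} {T : Set (EuclideanSpace ℝ (Fin n))} (hT : T.Countable)
    {F : EuclideanSpace ℝ (Fin n) → ℝ≥0∞} {M : ℝ≥0∞} (hM : M ≠ ⊤)
    (hF : ∀ y : EuclideanSpace ℝ (Fin n), ∑' x : Metric.closedBall y (1 / 4), F x ≤ M) :
    ∑' x : T, F x * decayWeight (x : EuclideanSpace ℝ (Fin n)) ≠ ⊤ := by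
  have : Countable T := hT
  set c : ℝ≥0∞ := volume (Metric.closedBall (0 : EuclideanSpace ℝ (Fin n)) (1 / 4)) with hc
  have hc0 : c ≠ 0 := (Metric.measure_closedBall_pos _ _ (by norm_num)).ne'
  set C : ℝ≥0∞ := ENNReal.ofReal (2 ^ ((n : ℝ) + 1)) with hC
  have hI : ∫⁻ y : EuclideanSpace ℝ (Fin n), decayWeight y ≠ ⊤ :=
    (finite_integral_one_add_norm (E := EuclideanSpace ℝ (Fin n)) (μ := volume) (by simp)).ne
  have hmeas : Measurable (decayWeight : EuclideanSpace ℝ (Fin n) → ℝ≥0∞) := by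
    unfold decayWeight
    fun_prop
  have hstep (x : EuclideanSpace ℝ (Fin n)) : decayWeight x * c
      ≤ ∫⁻ y, C * (Metric.closedBall x (1 / 4)).indicator decayWeight y := by
    calc decayWeight x * c = ∫⁻ _ in Metric.closedBall x (1 / 4), decayWeight x := by
          rw [setLIntegral_const, hc, Measure.addHaar_closedBall_center volume x]
      _ ≤ ∫⁻ y in Metric.closedBall x (1 / 4), C * decayWeight y :=
          setLIntegral_mono (hmeas.const_mul _) fun y hy =>
            decayWeight_le (by rw [dist_comm]; exact hy)
      _ = _ := by
          rw [← lintegral_indicator Metric.isClosed_closedBall.measurableSet]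
          refine lintegral_congr fun y => ?_
          by_cases hy : y ∈ Metric.closedBall x (1 / 4)
          · rw [Set.indicator_of_mem hy, Set.indicator_of_mem hy]
          · rw [Set.indicator_of_notMem hy, Set.indicator_of_notMem hy, mul_zero]
  have hball (y : EuclideanSpace ℝ (Fin n)) :
      ∑' x : T, F x * (C * (Metric.closedBall x.1 (1 / 4)).indicator decayWeight y)
        ≤ M * (C * decayWeight y) := by
    calc _ ≤ ∑' x : EuclideanSpace ℝ (Fin n),
            F x * (C * (Metric.closedBall x (1 / 4)).indicator decayWeight y) :=
          ENNReal.tsum_comp_le_tsum_of_injective Subtype.val_injective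
            (fun x : EuclideanSpace ℝ (Fin n) =>
              F x * (C * (Metric.closedBall x (1 / 4)).indicator decayWeight y))
      _ = ∑' x : EuclideanSpace ℝ (Fin n),
            (Metric.closedBall y (1 / 4)).indicator F x * (C * decayWeight y) := by
          refine tsum_congr fun x => ?_
          by_cases h : y ∈ Metric.closedBall x (1 / 4)
          · rw [Set.indicator_of_mem h, Set.indicator_of_mem (Metric.mem_closedBall_comm.mp h)]
          · rw [Set.indicator_of_notMem h,
              Set.indicator_of_notMem (mt Metric.mem_closedBall_comm.mp h)]
            simp
      _ ≤ _ := by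
          rw [ENNReal.tsum_mul_right, ← tsum_subtype]
          gcongr
          exact hF y
  have hmain : (∑' x : T, F x * decayWeight (x : EuclideanSpace ℝ (Fin n))) * c
      ≤ M * (C * ∫⁻ y : EuclideanSpace ℝ (Fin n), decayWeight y) := by
    rw [← ENNReal.tsum_mul_right]
    calc _ ≤ ∑' x : T, ∫⁻ y,
            F x * (C * (Metric.closedBall x.1 (1 / 4)).indicator decayWeight y) := by
          refine ENNReal.tsum_le_tsum fun x => ?_
          rw [lintegral_const_mul _ ((hmeas.indicator
            Metric.isClosed_closedBall.measurableSet).const_mul _), mul_assoc]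
          gcongr
          exact hstep x
      _ = ∫⁻ y, ∑' x : T,
            F x * (C * (Metric.closedBall x.1 (1 / 4)).indicator decayWeight y) := by
          rw [lintegral_tsum]
          exact fun x => (((hmeas.indicator
            Metric.isClosed_closedBall.measurableSet).const_mul _).const_mul _).aemeasurable
      _ ≤ ∫⁻ y, M * (C * decayWeight y) := lintegral_mono hball
      _ = _ := by
          rw [lintegral_const_mul _ (hmeas.const_mul _), lintegral_const_mul _ hmeas]
  intro htop
  rw [htop, ENNReal.top_mul hc0, top_le_iff] at hmain
  exact ENNReal.mul_ne_top hM (ENNReal.mul_ne_top ENNReal.ofReal_ne_top hI) hmain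

lemma exists_enorm_schwartz_le {n : ℕ} (ψ : SchwartzMap (EuclideanSpace ℝ (Fin n)) ℂ) :
    ∃ C : ℝ≥0∞, C ≠ ⊤ ∧ ∀ x, ‖ψ x‖ₑ ≤ decayWeight x * C := by
  obtain ⟨C, hC⟩ : ∃ C : ℝ, ∀ x, (1 + ‖x‖) ^ (n + 1) * ‖ψ x‖ ≤ C := by
    refine ⟨2 ^ (n + 1) * (Finset.Iic (n + 1, 0)).sup (fun m => SchwartzMap.seminorm ℝ m.1 m.2) ψ,
      fun x => ?_⟩
    have := SchwartzMap.one_add_le_sup_seminorm_apply (𝕜 := ℝ) (m := (n + 1, 0)) (k := n + 1)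
      (n := 0) le_rfl le_rfl ψ x
    rwa [norm_iteratedFDeriv_zero] at this
  refine ⟨ENNReal.ofReal C, ENNReal.ofReal_ne_top, fun x => ?_⟩
  unfold decayWeight
  rw [← ENNReal.ofReal_mul (by positivity), ← ofReal_norm]
  refine ENNReal.ofReal_le_ofReal ?_
  rw [Real.rpow_neg (by positivity), le_inv_mul_iff₀ (by positivity)]
  have := hC x
  rwa [← Real.rpow_natCast, Nat.cast_add, Nat.cast_one] at this

/-- Absolute summability of `w j x * ψ x` over all pairs `(j, x)`. -/
lemma summable_mul_schwartz {n : ℕ} {S : ℕ → Set (EuclideanSpace ℝ (Fin n))}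
    (hS : ∀ j, (S j).Countable) {w : ℕ → EuclideanSpace ℝ (Fin n) → ℂ}
    (hw : ∀ j x, x ∉ S j → w j x = 0) (hsum : ∑' j : ℕ, locNorm (S j) (w j) ≠ ⊤)
    (ψ : SchwartzMap (EuclideanSpace ℝ (Fin n)) ℂ) :
    Summable fun p : ℕ × EuclideanSpace ℝ (Fin n) => ‖w p.1 p.2 * ψ p.2‖ := by
  obtain ⟨C, hC, hψ⟩ := exists_enorm_schwartz_le ψ
  have hfin := tsum_mul_decay_ne_top (Set.countable_iUnion hS)
    (F := fun x => ∑' j, ‖w j x‖ₑ) hsum fun y =>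
      tsum_enorm_le_of_compact hw (isCompact_closedBall y (1 / 4))
        ((Metric.diam_closedBall (by norm_num)).trans_lt (by norm_num))
  have hle : ∑' p : ℕ × EuclideanSpace ℝ (Fin n), ‖w p.1 p.2 * ψ p.2‖ₑ ≠ ⊤ := by
    refine ne_top_of_le_ne_top (ENNReal.mul_ne_top hfin hC) ?_
    rw [ENNReal.tsum_prod (f := fun j x => ‖w j x * ψ x‖ₑ), ENNReal.tsum_comm,
      ← ENNReal.tsum_mul_right]
    rw [← tsum_subtype_eq_of_support_subset (s := ⋃ j, S j)]
    · refine ENNReal.tsum_le_tsum fun x => ?_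
      simp_rw [enorm_mul]
      rw [ENNReal.tsum_mul_right, mul_assoc]
      gcongr
      exact hψ x
    · intro x hx
      contrapose! hx
      rw [Set.mem_iUnion, not_exists] at hx
      simp [hw _ x (hx _)]
  have := ENNReal.tsum_coe_ne_top_iff_summable.mp hle
  exact NNReal.summable_coe.mpr this

/-- The `M`-test for point measures: if `∑_j ‖ν_j‖_loc < ∞`, then (i) for every Schwartz
function `ψ` the double series `∑_j ∑_{x ∈ S_j} w_j(x)ψ(x)` converges absolutely;
(ii) with `S = ⋃ S_j` and `w(x) = ∑_j w_j(x)` (absolutely convergent), the double series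
equals `∑_{x ∈ S} w(x)ψ(x)`; and (iii) the limit is translation bounded:
`∑_{x ∈ S ∩ (K + a)} |w(x)| ≤ ∑_j ‖ν_j‖_loc` for every compact `K` of diameter `< 1`
and every translation `a`. -/
theorem stmt_16 (n : ℕ) (S : ℕ → Set (EuclideanSpace ℝ (Fin n)))
    (hS : ∀ j, (S j).Countable)
    (w : ℕ → EuclideanSpace ℝ (Fin n) → ℂ)
    (hw : ∀ j x, x ∉ S j → w j x = 0)
    (hsum : ∑' j : ℕ, locNorm (S j) (w j) ≠ ⊤) :
    (∀ ψ : SchwartzMap (EuclideanSpace ℝ (Fin n)) ℂ,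
        Summable (fun p : (Σ j : ℕ, ↥(S j)) => ‖w p.1 p.2 * ψ p.2‖)) ∧
    (∀ x, Summable (fun j : ℕ => ‖w j x‖)) ∧
    (∀ ψ : SchwartzMap (EuclideanSpace ℝ (Fin n)) ℂ,
        ∑' (j : ℕ) (x : ↥(S j)), w j x * ψ x
          = ∑' x : ↥(⋃ j, S j), (∑' j : ℕ, w j (x : EuclideanSpace ℝ (Fin n))) * ψ x) ∧
    (∀ K : Set (EuclideanSpace ℝ (Fin n)), IsCompact K → Metric.diam K < 1 →
      ∀ a : EuclideanSpace ℝ (Fin n),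
        ∑' x : ↥((⋃ j, S j) ∩ ((fun y => a + y) '' K)),
            (‖∑' j : ℕ, w j (x : EuclideanSpace ℝ (Fin n))‖₊ : ℝ≥0∞)
          ≤ ∑' j : ℕ, locNorm (S j) (w j)) := by
  have hpt (x : EuclideanSpace ℝ (Fin n)) : Summable (fun j : ℕ => ‖w j x‖) := by
    have h := tsum_enorm_le_of_compact hw (isCompact_singleton (x := x)) (by simp)
    rw [tsum_singleton x (fun x => ∑' j, ‖w j x‖ₑ)] at h
    exact NNReal.summable_coe.mpr
      (ENNReal.tsum_coe_ne_top_iff_summable.mp (ne_top_of_le_ne_top hsum h))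
  refine ⟨fun ψ => ?_, hpt, fun ψ => ?_, fun K hK hd a => ?_⟩
  · refine (summable_mul_schwartz hS hw hsum ψ).comp_injective
      (i := fun p : (Σ j : ℕ, ↥(S j)) => (p.1, (p.2 : EuclideanSpace ℝ (Fin n)))) ?_
    rintro ⟨j, x, hx⟩ ⟨k, y, hy⟩ h
    obtain ⟨rfl, rfl⟩ := Prod.mk.inj h
    rfl
  -- Both sides are extended to sums over all of `ℝⁿ`, where the summations can be exchanged.
  · have hl (j : ℕ) : ∑' x : ↥(S j), w j x * ψ x = ∑' x, w j x * ψ x :=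
      tsum_subtype_eq_of_support_subset (f := fun x => w j x * ψ x) fun x hx => by
        contrapose! hx
        simp [hw j x hx]
    have hr : ∑' x : ↥(⋃ j, S j), (∑' j : ℕ, w j (x : EuclideanSpace ℝ (Fin n))) * ψ x
        = ∑' x, (∑' j : ℕ, w j x) * ψ x :=
      tsum_subtype_eq_of_support_subset (f := fun x => (∑' j : ℕ, w j x) * ψ x) fun x hx => by
        contrapose! hx
        rw [Set.mem_iUnion, not_exists] at hx
        simp [hw _ x (hx _)]
    have hs : Summable (Function.uncurry fun j x => w j x * ψ x) :=
      (summable_mul_schwartz hS hw hsum ψ).of_norm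
    simp_rw [hl, hr, ← tsum_mul_right]
    exact hs.tsum_comm.symm
  · have hK' : IsCompact ((fun y => a + y) '' K) := hK.image (by fun_prop)
    have hd' : Metric.diam ((fun y => a + y) '' K) < 1 := by
      rwa [(isometry_add_left a).diam_image]
    refine le_trans ?_ (tsum_enorm_le_of_compact hw hK' hd')
    refine le_trans (ENNReal.tsum_le_tsum fun x => ?_)
      (ENNReal.tsum_mono_subtype (fun x => ∑' j, ‖w j x‖ₑ) Set.inter_subset_right)
    exact enorm_tsum_le_tsum_enorm
end
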